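/- The triples of statistics (\underline{31}2, 2\underline{13}, 2\underline{31}) and (\underline{31}2, 2\underline{31}, 2\underline{13}) are equidistributed on the set of Baxter permutations of [n]: ∑_{π Baxter} q^{31̲2(π)} r^{213̲(π)} s^{231̲(π)} = ∑_{π Baxter} q^{31̲2(π)} r^{231̲(π)} s^{213̲(π)}. -/

import Mathlib

/-!
Attach every occurrence of a vincular pattern of length three to the letter `ℓ` which plays the
role of 2: the four statistics then count the upcrossings and downcrossings of the level `ℓ` by the
word of `σ`, to the left or to the right of `ℓ`.

Insert the letters of `σ` in increasing order. At each stage the letters present form maximal blocks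
of the word, separated by slots for the larger letters, and `σ` is Baxter if and only if each letter
`k + 1` enters one of the two slots adjacent to the block of `k`. A Baxter permutation is therefore
encoded by two walks, `k ↦ upTo σ k k` and `k ↦ downFrom σ k k`, which count the blocks to the left
and to the right of the one containing `k`, together with the choices of slot. Their sums are the
numbers of occurrences of `\underline{13}2` and `2\underline{31}`.

Replacing the left walk by `k ↦ downBefore σ k`, which counts occurrences of `\underline{31}2`,
again gives an admissible encoding, because upcrossings and downcrossings alternate. So there is a
Baxter permutation `τ` having `\underline{13}2` in place of `\underline{31}2` and the same numbers
of occurrences of `2\underline{13}` and `2\underline{31}`, and `σ` can be recovered from `τ`.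
Complementing `τ` gives the symmetry.
-/

namespace Paper

variable {n : ℕ}

/-- The 1-based position corresponding to `i : Fin n`. -/
def pv (i : Fin n) : ℕ := (i : ℕ) + 1

/-- The 1-based letter of the word `f` at 1-based position `k` (0 if out of range). -/
def valAt (f : Fin n → Fin n) (k : ℕ) : ℕ :=
  if h : 1 ≤ k ∧ k ≤ n then ((f ⟨k - 1, by omega⟩ : Fin n) : ℕ) + 1 else 0

/-- The map θ̂ : the 1-based `i`-th letter of `hatTheta f` is `σ̂_{n+1-i}`,
where `σ̂ₐ = n - a` (1-based) if `a < n` and `n̂ = n`. (0-based encoding.) -/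
def hatTheta (f : Fin n → Fin n) (i : Fin n) : Fin n :=
  if ((f i.rev : ℕ)) = n - 1 then f i.rev
  else ⟨n - 2 - (f i.rev : ℕ), by have := i.isLt; omega⟩

end Paper

namespace Paper

variable {n : ℕ}

/-- 2\underline{13}(σ) = #{(ℓ,j) : σ⁻¹(ℓ) < j < n, σⱼ < ℓ < σ_{j+1}} (1-based). -/
def stat2_13 (σ : Equiv.Perm (Fin n)) : ℕ :=
  (Finset.univ.filter (fun p : Fin n × Fin n =>
    pv (σ.symm p.1) < pv p.2 ∧ pv p.2 < n ∧
    valAt ⇑σ (pv p.2) < pv p.1 ∧ pv p.1 < valAt ⇑σ (pv p.2 + 1))).card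

/-- 2\underline{31}(σ) = #{(ℓ,j) : σ⁻¹(ℓ) < j < n, σ_{j+1} < ℓ < σⱼ} (1-based). -/
def stat2_31 (σ : Equiv.Perm (Fin n)) : ℕ :=
  (Finset.univ.filter (fun p : Fin n × Fin n =>
    pv (σ.symm p.1) < pv p.2 ∧ pv p.2 < n ∧
    valAt ⇑σ (pv p.2 + 1) < pv p.1 ∧ pv p.1 < valAt ⇑σ (pv p.2))).card

/-- \underline{31}2(σ) = #{(ℓ,j) : 1 < j < σ⁻¹(ℓ), σⱼ < ℓ < σ_{j-1}} (1-based). -/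
def stat31_2 (σ : Equiv.Perm (Fin n)) : ℕ :=
  (Finset.univ.filter (fun p : Fin n × Fin n =>
    1 < pv p.2 ∧ pv p.2 < pv (σ.symm p.1) ∧
    valAt ⇑σ (pv p.2) < pv p.1 ∧ pv p.1 < valAt ⇑σ (pv p.2 - 1))).card

/-- \underline{13}2(σ) = #{(ℓ,j) : 1 < j < σ⁻¹(ℓ), σ_{j-1} < ℓ < σⱼ} (1-based). -/
def stat13_2 (σ : Equiv.Perm (Fin n)) : ℕ :=
  (Finset.univ.filter (fun p : Fin n × Fin n =>
    1 < pv p.2 ∧ pv p.2 < pv (σ.symm p.1) ∧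
    valAt ⇑σ (pv p.2 - 1) < pv p.1 ∧ pv p.1 < valAt ⇑σ (pv p.2))).card

end Paper

namespace Paper

variable {n : ℕ}

/-- `f` contains the vincular pattern 3\underline{14}2:
∃ i < j, j+1 < ℓ with σⱼ < σ_ℓ < σᵢ < σ_{j+1} (1-based). -/
def Contains3142 (f : Fin n → Fin n) : Prop :=
  ∃ i j l : Fin n, pv i < pv j ∧ pv j + 1 < pv l ∧
    valAt f (pv j) < valAt f (pv l) ∧ valAt f (pv l) < valAt f (pv i) ∧
    valAt f (pv i) < valAt f (pv j + 1)

/-- `f` contains the vincular pattern 2\underline{41}3: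
∃ i < j, j+1 < ℓ with σ_{j+1} < σᵢ < σ_ℓ < σⱼ (1-based). -/
def Contains2413 (f : Fin n → Fin n) : Prop :=
  ∃ i j l : Fin n, pv i < pv j ∧ pv j + 1 < pv l ∧
    valAt f (pv j + 1) < valAt f (pv i) ∧ valAt f (pv i) < valAt f (pv l) ∧
    valAt f (pv l) < valAt f (pv j)

/-- `f` contains \overline{2}41\overline{3}:
∃ i < j < k < ℓ with σₖ < σᵢ < σ_ℓ = σᵢ + 1 < σⱼ. -/
def Contains2b41_3b (f : Fin n → Fin n) : Prop :=
  ∃ i j k l : Fin n, pv i < pv j ∧ pv j < pv k ∧ pv k < pv l ∧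
    valAt f (pv k) < valAt f (pv i) ∧ valAt f (pv l) = valAt f (pv i) + 1 ∧
    valAt f (pv i) + 1 < valAt f (pv j)

/-- `f` contains \overline{3}14\overline{2}:
∃ i < j < k < ℓ with σⱼ < σ_ℓ < σᵢ = σ_ℓ + 1 < σₖ. -/
def Contains3b14_2b (f : Fin n → Fin n) : Prop :=
  ∃ i j k l : Fin n, pv i < pv j ∧ pv j < pv k ∧ pv k < pv l ∧
    valAt f (pv j) < valAt f (pv l) ∧ valAt f (pv i) = valAt f (pv l) + 1 ∧
    valAt f (pv l) + 1 < valAt f (pv k)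

/-- A Baxter permutation avoids both 3\underline{14}2 and 2\underline{41}3. -/
def IsBaxter (f : Fin n → Fin n) : Prop :=
  ¬ Contains3142 f ∧ ¬ Contains2413 f

end Paper

namespace Paper

instance (n : ℕ) : DecidablePred (fun σ : Equiv.Perm (Fin n) => IsBaxter ⇑σ) :=
  fun σ => by unfold IsBaxter Contains3142 Contains2413; infer_instance

/-! ### Finite sums, orders and initial segments -/

section General

open Finset

theorem le_of_isLowerSet_range {ι α : Type*} [LinearOrder α] [WellFoundedLT α] {f g : ι → α}
    (hf : IsLowerSet (Set.range f)) (hfg : ∀ x y, f x < f y → g x < g y) (x : ι) : f x ≤ g x := by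
  induction hx : f x using WellFoundedLT.induction generalizing x with
  | ind a ih =>
    subst hx
    by_contra! hlt
    obtain ⟨y, hy⟩ := hf hlt.le ⟨x, rfl⟩
    have hyx : f y < f x := hy ▸ hlt
    exact (ih _ hyx y rfl).not_gt (hy ▸ hfg y x hyx)

theorem eq_of_isLowerSet_range {ι α : Type*} [LinearOrder α] [WellFoundedLT α] {f g : ι → α}
    (hf : IsLowerSet (Set.range f)) (hg : IsLowerSet (Set.range g))
    (hfg : ∀ x y, f x < f y ↔ g x < g y) : f = g :=
  funext fun x => (le_of_isLowerSet_range hf (fun x y => (hfg x y).1) x).antisymm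
    (le_of_isLowerSet_range hg (fun x y => (hfg x y).2) x)

theorem sum_eq_sum_of_leftUnique {α M : Type*} [AddCommMonoid M] {s : Finset α}
    {r : α → α → Prop} {f g : α → M} (htotal : ∀ x ∈ s, ∃ y ∈ s, r x y)
    (hunique : ∀ x ∈ s, ∀ x' ∈ s, ∀ y ∈ s, r x y → r x' y → x = x')
    (hfg : ∀ x ∈ s, ∀ y ∈ s, r x y → f x = g y) : ∑ x ∈ s, f x = ∑ y ∈ s, g y := by
  choose! φ hφs hφ using htotal
  have hinj : Set.InjOn φ s := fun x hx x' hx' h =>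
    hunique x hx x' hx' (φ x) (hφs x hx) (hφ x hx) (h ▸ hφ x' hx')
  exact sum_nbij φ hφs hinj (surjOn_of_injOn_of_card_le φ hφs hinj le_rfl)
    fun x hx => hfg x hx _ (hφs x hx) (hφ x hx)

theorem exists_equiv_fin_lt_iff {α : Type*} [Fintype α] {n : ℕ} (hn : Fintype.card α = n)
    (r : α → α → Prop) [IsStrictTotalOrder α r] : ∃ e : α ≃ Fin n, ∀ x y, e x < e y ↔ r x y := by
  classical
  let _ := linearOrderOfSTO r
  exact ⟨(Fintype.orderIsoFinOfCardEq α hn).symm.toEquiv,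
    fun _ _ => (Fintype.orderIsoFinOfCardEq α hn).symm.lt_iff_lt⟩

theorem exists_mem_Ico_and_not_succ {P : ℕ → Prop} {x y : ℕ} (hxy : x ≤ y) (hx : P x)
    (hy : ¬ P y) : ∃ k ∈ Ico x y, P k ∧ ¬ P (k + 1) := by
  induction y, hxy using Nat.le_induction with
  | base => exact absurd hx hy
  | succ y hxy ih =>
    by_cases hPy : P y
    · exact ⟨y, mem_Ico.2 ⟨hxy, y.lt_succ_self⟩, hPy, hy⟩
    · obtain ⟨k, hk, hP⟩ := ih hPy
      exact ⟨k, Ico_subset_Ico_right y.le_succ hk, hP⟩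

theorem card_filter_fin_prod {n : ℕ} {P : Fin n × Fin n → Prop} [DecidablePred P] (F : ℕ → ℕ)
    (hF : ∀ l : Fin n, #{j | P (l, j)} = F l) : #{p | P p} = ∑ k ∈ range n, F k := by
  rw [card_filter, Fintype.sum_prod_type, ← Fin.sum_univ_eq_sum_range]
  exact sum_congr rfl fun l _ => by rw [← hF l, card_filter]

theorem card_filter_fin_eq_card_filter_Ico {n p q : ℕ} (t : ℕ) {P : Fin n → Prop} {Q : ℕ → Prop}
    [DecidablePred P] [DecidablePred Q] (hq : q + t ≤ n)
    (hP : ∀ j : Fin n, P j ↔ t ≤ j ∧ (j - t : ℕ) ∈ Ico p q ∧ Q (j - t)) :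
    #{j | P j} = #{j ∈ Ico p q | Q j} := by
  refine card_nbij (fun j => (j - t : ℕ)) ?_ ?_ ?_
  · intro j hj
    rw [mem_coe, mem_filter_univ, hP] at hj
    exact mem_filter.2 hj.2
  · intro i hi j hj hij
    rw [mem_coe, mem_filter_univ, hP] at hi hj
    dsimp only at hij
    omega
  · intro j hj
    rw [mem_coe, mem_filter, mem_Ico] at hj
    refine ⟨⟨j + t, by omega⟩, ?_, Nat.add_sub_cancel j t⟩
    rw [mem_coe, mem_filter_univ, hP, mem_Ico]
    simpa using hj

end General

/-! ### Level crossings of a sequence -/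

section Crossings

open Finset

/-- The number of steps `j → j + 1` with `p ≤ j < q` at which `f` rises from a value `≤ c` to a
value `> c`. Vincular patterns of length three are counted by crossings of the level of their
isolated letter. -/
def upcrossings (f : ℕ → ℕ) (c p q : ℕ) : ℕ :=
  ∑ j ∈ Ico p q, if f j ≤ c ∧ c < f (j + 1) then 1 else 0

/-- The number of steps `j → j + 1` with `p ≤ j < q` at which `f` falls from a value `> c` to a
value `≤ c`. -/
def downcrossings (f : ℕ → ℕ) (c p q : ℕ) : ℕ :=
  ∑ j ∈ Ico p q, if c < f j ∧ f (j + 1) ≤ c then 1 else 0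

variable {f : ℕ → ℕ} {c p q r : ℕ}

theorem upcrossings_add (hpq : p ≤ q) (hqr : q ≤ r) :
    upcrossings f c p q + upcrossings f c q r = upcrossings f c p r :=
  sum_Ico_consecutive _ hpq hqr

theorem downcrossings_add (hpq : p ≤ q) (hqr : q ≤ r) :
    downcrossings f c p q + downcrossings f c q r = downcrossings f c p r :=
  sum_Ico_consecutive _ hpq hqr

theorem upcrossings_succ (hpq : p ≤ q) :
    upcrossings f c p (q + 1) =
      upcrossings f c p q + if f q ≤ c ∧ c < f (q + 1) then 1 else 0 :=
  sum_Ico_succ_top hpq _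

theorem downcrossings_succ (hpq : p ≤ q) :
    downcrossings f c p (q + 1) =
      downcrossings f c p q + if c < f q ∧ f (q + 1) ≤ c then 1 else 0 :=
  sum_Ico_succ_top hpq _

theorem upcrossings_self (f : ℕ → ℕ) (c p : ℕ) : upcrossings f c p p = 0 := by
  simp [upcrossings]

theorem downcrossings_self (f : ℕ → ℕ) (c p : ℕ) : downcrossings f c p p = 0 := by
  simp [downcrossings]

theorem upcrossings_eq_card (f : ℕ → ℕ) (c p q : ℕ) :
    upcrossings f c p q = #{j ∈ Ico p q | f j ≤ c ∧ c < f (j + 1)} :=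
  (card_filter _ _).symm

theorem downcrossings_eq_card (f : ℕ → ℕ) (c p q : ℕ) :
    downcrossings f c p q = #{j ∈ Ico p q | c < f j ∧ f (j + 1) ≤ c} :=
  (card_filter _ _).symm

theorem upcrossings_add_ite_eq (f : ℕ → ℕ) (c : ℕ) (hpq : p ≤ q) :
    upcrossings f c p q + (if c < f p then 1 else 0) =
      downcrossings f c p q + if c < f q then 1 else 0 := by
  induction q, hpq using Nat.le_induction with
  | base => rw [upcrossings_self, downcrossings_self]
  | succ q hpq ih =>
    rw [upcrossings_succ hpq, downcrossings_succ hpq]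
    split_ifs at ih ⊢ <;> omega

theorem upcrossings_level_succ (h : ∀ j ∈ Icc p q, f j ≠ c + 1) :
    upcrossings f (c + 1) p q = upcrossings f c p q := by
  refine sum_congr rfl fun j hj => if_congr ?_ rfl rfl
  rw [mem_Ico] at hj
  have hj₀ := h j (mem_Icc.2 ⟨hj.1, hj.2.le⟩)
  have hj₁ := h (j + 1) (mem_Icc.2 ⟨by omega, by omega⟩)
  omega

theorem downcrossings_level_succ (h : ∀ j ∈ Icc p q, f j ≠ c + 1) :
    downcrossings f (c + 1) p q = downcrossings f c p q := by
  refine sum_congr rfl fun j hj => if_congr ?_ rfl rfl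
  rw [mem_Ico] at hj
  have hj₀ := h j (mem_Icc.2 ⟨hj.1, hj.2.le⟩)
  have hj₁ := h (j + 1) (mem_Icc.2 ⟨by omega, by omega⟩)
  omega

theorem upcrossings_level_succ_le (h : ∀ j ∈ Ico p q, f j ≠ c + 1) :
    upcrossings f (c + 1) p q ≤ upcrossings f c p q := by
  refine sum_le_sum fun j hj => ?_
  have := h j hj
  split_ifs <;> omega

theorem upcrossings_le_level_succ_add_one (h : ∀ j ∈ Ico p q, f j ≠ c + 1) :
    upcrossings f c p q ≤ upcrossings f (c + 1) p q + 1 := by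
  rcases Nat.lt_or_ge p q with hpq | hqp
  · obtain ⟨q, rfl⟩ := Nat.exists_eq_add_one_of_ne_zero hpq.ne_bot
    have hpq := Nat.le_of_lt_succ hpq
    rw [upcrossings_succ hpq, upcrossings_succ hpq, upcrossings_level_succ fun j hj =>
      h j (mem_Ico.2 ⟨(mem_Icc.1 hj).1, Nat.lt_succ_of_le (mem_Icc.1 hj).2⟩)]
    split_ifs <;> omega
  · rw [upcrossings, Ico_eq_empty_of_le hqp, sum_empty]
    exact Nat.zero_le _

theorem downcrossings_level_succ_le (h : ∀ j ∈ Ioc p q, f j ≠ c + 1) :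
    downcrossings f (c + 1) p q ≤ downcrossings f c p q := by
  refine sum_le_sum fun j hj => ?_
  have := h (j + 1) (by rw [mem_Ioc]; rw [mem_Ico] at hj; omega)
  split_ifs <;> omega

theorem downcrossings_le_level_succ_add_one (h : ∀ j ∈ Ioc p q, f j ≠ c + 1) :
    downcrossings f c p q ≤ downcrossings f (c + 1) p q + 1 := by
  rcases Nat.lt_or_ge p q with hpq | hqp
  · rw [← downcrossings_add p.le_succ hpq, ← downcrossings_add (c := c + 1) p.le_succ hpq,
      downcrossings_level_succ (p := p.succ) fun j hj =>
        h j (mem_Ioc.2 ⟨(mem_Icc.1 hj).1, (mem_Icc.1 hj).2⟩),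
      downcrossings_succ le_rfl, downcrossings_succ le_rfl, downcrossings_self, downcrossings_self]
    split_ifs <;> omega
  · rw [downcrossings, Ico_eq_empty_of_le hqp, sum_empty]
    exact Nat.zero_le _

theorem upcrossings_pos_iff :
    0 < upcrossings f c p q ↔ ∃ j ∈ Ico p q, f j ≤ c ∧ c < f (j + 1) := by
  rw [upcrossings_eq_card, card_pos, filter_nonempty_iff]

theorem downcrossings_pos_iff :
    0 < downcrossings f c p q ↔ ∃ j ∈ Ico p q, c < f j ∧ f (j + 1) ≤ c := by
  rw [downcrossings_eq_card, card_pos, filter_nonempty_iff]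

theorem upcrossings_eq_zero (h : ∀ j ∈ Ico p q, ¬ (f j ≤ c ∧ c < f (j + 1))) :
    upcrossings f c p q = 0 :=
  sum_eq_zero fun j hj => if_neg (h j hj)

theorem downcrossings_eq_zero (h : ∀ j ∈ Ico p q, ¬ (c < f j ∧ f (j + 1) ≤ c)) :
    downcrossings f c p q = 0 :=
  sum_eq_zero fun j hj => if_neg (h j hj)

theorem upcrossings_pos_of_lt (hpr : p ≤ r) (hp : f p ≤ c) (hr : c < f r) :
    0 < upcrossings f c p r := by
  have := upcrossings_add_ite_eq f c hpr
  split_ifs at this <;> omega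

theorem upcrossings_pos_iff_exists_lt (hq : f q ≤ c) (hp : f p ≤ c) :
    0 < upcrossings f c p q ↔ ∃ r ∈ Ioo p q, c < f r := by
  constructor
  · rw [upcrossings_pos_iff]
    rintro ⟨j, hj, -, hcj⟩
    have : j + 1 ≠ q := by rintro rfl; omega
    exact ⟨j + 1, by simp only [mem_Ico, mem_Ioo] at hj ⊢; omega, hcj⟩
  · rintro ⟨r, hr, hcr⟩
    rw [mem_Ioo] at hr
    rw [← upcrossings_add hr.1.le hr.2.le]
    exact Nat.add_pos_left (upcrossings_pos_of_lt hr.1.le hp hcr) _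

theorem exists_upcrossings_eq {t : ℕ} (hpq : p ≤ q) (ht : t < upcrossings f c p q) :
    ∃ j ∈ Ico p q, f j ≤ c ∧ c < f (j + 1) ∧ upcrossings f c p j = t := by
  have h0 : upcrossings f c p p ≤ t := by rw [upcrossings_self]; exact t.zero_le
  obtain ⟨j, hj, hjt, hjt'⟩ :=
    exists_mem_Ico_and_not_succ (P := fun j => upcrossings f c p j ≤ t) hpq h0 ht.not_ge
  have hpj := (mem_Ico.1 hj).1
  rw [upcrossings_succ hpj] at hjt'
  split_ifs at hjt' with hc <;> first | exact ⟨j, hj, hc.1, hc.2, by omega⟩ | omega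

end Crossings

/-! ### Words of permutations -/

section Word

open Finset

variable {n : ℕ}

/-- The one-line notation of `σ` as a permutation of `ℕ`. It fixes every number `≥ n`, so position
`n` carries a letter larger than all letters of `σ`: a sentinel which closes the last step. -/
def word (σ : Equiv.Perm (Fin n)) : Equiv.Perm ℕ := σ.extendDomain Fin.equivSubtype

/-- The 0-based position of a letter in `word σ`. -/
def pos (σ : Equiv.Perm (Fin n)) : Equiv.Perm ℕ := (word σ).symm

variable (σ : Equiv.Perm (Fin n))

theorem word_coe (j : Fin n) : word σ j = σ j :=
  σ.extendDomain_apply_image Fin.equivSubtype j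

theorem word_of_le {j : ℕ} (hj : n ≤ j) : word σ j = j :=
  σ.extendDomain_apply_not_subtype _ hj.not_gt

theorem word_lt_iff {j : ℕ} : word σ j < n ↔ j < n := by
  refine ⟨fun h => ?_, fun h => ?_⟩
  · by_contra! hj
    rw [word_of_le σ hj] at h
    exact h.not_ge hj
  · exact (word_coe σ ⟨j, h⟩).trans_lt (σ ⟨j, h⟩).isLt

@[simp]
theorem word_pos (k : ℕ) : word σ (pos σ k) = k := (word σ).apply_symm_apply k

@[simp]
theorem pos_word (j : ℕ) : pos σ (word σ j) = j := (word σ).symm_apply_apply j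

theorem pos_coe (l : Fin n) : pos σ l = σ.symm l := by
  rw [← pos_word σ (σ.symm l), word_coe, σ.apply_symm_apply]

theorem pos_lt_iff {k : ℕ} : pos σ k < n ↔ k < n := by
  rw [← word_lt_iff σ, word_pos]

theorem word_eq_iff {j k : ℕ} : word σ j = k ↔ j = pos σ k := (word σ).eq_symm_apply.symm

theorem word_ne_of_lt_pos {j k : ℕ} (h : j < pos σ k) : word σ j ≠ k :=
  fun hj => h.ne ((word_eq_iff σ).1 hj)

theorem word_ne_of_pos_lt {j k : ℕ} (h : pos σ k < j) : word σ j ≠ k :=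
  fun hj => h.ne' ((word_eq_iff σ).1 hj)

theorem valAt_succ {j : ℕ} (hj : j < n) : valAt σ (j + 1) = word σ j + 1 := by
  rw [valAt, dif_pos ⟨by omega, hj⟩]
  exact congrArg (· + 1) (word_coe σ ⟨j, hj⟩).symm

theorem valAt_pv (j : Fin n) : valAt σ (pv j) = word σ j + 1 := valAt_succ σ j.isLt

theorem valAt_pv_add_one {j : Fin n} (hj : j + 1 < n) :
    valAt σ (pv j + 1) = word σ (j + 1) + 1 :=
  valAt_succ σ hj

theorem valAt_pv_sub_one {j : Fin n} (hj : 1 ≤ (j : ℕ)) :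
    valAt σ (pv j - 1) = word σ (j - 1) + 1 := by
  rw [← valAt_succ σ (by omega), pv]
  congr 1
  omega

theorem pv_symm (l : Fin n) : pv (σ.symm l) = pos σ l + 1 := by rw [pv, pos_coe]

theorem perm_eq_of_pos_lt_iff {σ τ : Equiv.Perm (Fin n)}
    (h : ∀ i j, i < j → j < n → (pos σ i < pos σ j ↔ pos τ i < pos τ j)) : σ = τ := by
  have hlower (σ : Equiv.Perm (Fin n)) : IsLowerSet (Set.range fun i => σ.symm i) := by
    rw [σ.symm.surjective.range_eq]
    exact isLowerSet_univ
  have hsymm := eq_of_isLowerSet_range (hlower σ) (hlower τ) fun i j => by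
    rw [← Fin.val_fin_lt, ← Fin.val_fin_lt, ← pos_coe, ← pos_coe, ← pos_coe, ← pos_coe]
    rcases lt_trichotomy i j with hij | rfl | hji
    · exact h i j hij j.isLt
    · simp only [lt_irrefl]
    · have hσ := (pos σ).injective.ne (Fin.val_ne_of_ne hji.ne)
      have hτ := (pos τ).injective.ne (Fin.val_ne_of_ne hji.ne)
      have := h j i hji i.isLt
      omega
  exact Equiv.symm_bijective.injective (Equiv.ext (congrFun hsymm))

end Word

/-! ### The crossing numbers of a permutation -/

section Profile

open Finset

variable {n : ℕ} (σ : Equiv.Perm (Fin n))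

/-- The number of upcrossings of level `k` to the left of the letter `i`. For `i ≤ k` it is the
index of the maximal block of letters `≤ k` which contains `i`; for `i = k` it counts the
occurrences of `\underline{13}2` in which `k` plays the role of 2. -/
def upTo (k i : ℕ) : ℕ := upcrossings (word σ) k 0 (pos σ i)

/-- The number of downcrossings of level `k` to the right of the letter `i`; for `i = k` it counts
the occurrences of `2\underline{31}` in which `k` plays the role of 2. -/
def downFrom (k i : ℕ) : ℕ := downcrossings (word σ) k (pos σ i) n

/-- The number of occurrences of `\underline{31}2` in which a given letter plays the role of 2. -/
def downBefore : ℕ → ℕ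
  | 0 => 0
  | k + 1 => downcrossings (word σ) k 0 (pos σ (k + 1))

/-- The number of occurrences of `2\underline{13}` in which a given letter plays the role of 2;
the step from the last letter to the sentinel is left out. -/
def upAfter : ℕ → ℕ
  | 0 => 0
  | k + 1 => upcrossings (word σ) k (pos σ (k + 1)) (n - 1)

theorem stat13_2_eq_sum : stat13_2 σ = ∑ k ∈ range n, upTo σ k k := by
  refine card_filter_fin_prod _ fun l => ?_
  have hl := (pos_lt_iff σ).2 l.isLt
  rw [upTo, upcrossings_eq_card]
  refine card_filter_fin_eq_card_filter_Ico 1 hl fun j => ?_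
  dsimp only
  rcases Nat.eq_zero_or_pos j with hj | hj
  · simp [pv, hj]
  have hprev := word_eq_iff σ (j := j - 1) (k := l)
  have hcur := word_eq_iff σ (j := j) (k := l)
  rw [pv_symm, valAt_pv, valAt_pv_sub_one σ hj, pv, pv, mem_Ico, Nat.sub_add_cancel hj]
  omega

theorem stat2_31_eq_sum : stat2_31 σ = ∑ k ∈ range n, downFrom σ k k := by
  refine card_filter_fin_prod _ fun l => ?_
  rw [downFrom, downcrossings_eq_card]
  refine card_filter_fin_eq_card_filter_Ico 0 le_rfl fun j => ?_
  dsimp only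
  have hcur := word_eq_iff σ (j := j) (k := l)
  have hnext := word_eq_iff σ (j := j + 1) (k := l)
  rw [pv_symm, valAt_pv, pv, pv, mem_Ico, Nat.sub_zero]
  rcases Nat.lt_or_ge (j + 1) n with hj | hj
  · rw [valAt_succ σ hj]
    omega
  · have := word_of_le σ hj
    omega

theorem stat31_2_eq_sum : stat31_2 σ = ∑ k ∈ range n, downBefore σ k := by
  refine card_filter_fin_prod _ fun l => ?_
  have hl := (pos_lt_iff σ).2 l.isLt
  rcases hk : (l : ℕ) with _ | k
  · rw [downBefore, card_eq_zero, filter_eq_empty_iff]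
    rintro j -
    dsimp only
    rw [pv_symm, valAt_pv, pv, pv]
    omega
  rw [hk] at hl
  rw [downBefore, downcrossings_eq_card]
  refine card_filter_fin_eq_card_filter_Ico 1 hl fun j => ?_
  dsimp only
  rcases Nat.eq_zero_or_pos j with hj | hj
  · simp [pv, hj]
  have hprev := word_eq_iff σ (j := j - 1) (k := k + 1)
  have hcur := word_eq_iff σ (j := j) (k := k + 1)
  rw [pv_symm, valAt_pv, valAt_pv_sub_one σ hj, pv, pv, hk, mem_Ico, Nat.sub_add_cancel hj]
  omega

theorem stat2_13_eq_sum : stat2_13 σ = ∑ k ∈ range n, upAfter σ k := by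
  refine card_filter_fin_prod _ fun l => ?_
  rcases hk : (l : ℕ) with _ | k
  · rw [upAfter, card_eq_zero, filter_eq_empty_iff]
    rintro j -
    dsimp only
    rw [pv_symm, valAt_pv, pv, pv]
    omega
  rw [upAfter, upcrossings_eq_card]
  refine card_filter_fin_eq_card_filter_Ico 0 (Nat.sub_le n 1) fun j => ?_
  dsimp only
  have hcur := word_eq_iff σ (j := j) (k := k + 1)
  have hnext := word_eq_iff σ (j := j + 1) (k := k + 1)
  rw [pv_symm, valAt_pv, pv, pv, hk, mem_Ico, Nat.sub_zero]
  rcases Nat.lt_or_ge (j + 1) n with hj | hj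
  · rw [valAt_succ σ hj]
    omega
  · omega

variable {σ} {k i j : ℕ}

theorem upTo_add_downFrom_of_le (hik : i ≤ k) (hk : k < n) :
    upTo σ k i + downFrom σ k i + 1 = upcrossings (word σ) k 0 n := by
  have hi := ((pos_lt_iff σ).2 (hik.trans_lt hk)).le
  have hbal := upcrossings_add_ite_eq (word σ) k hi
  rw [word_pos, word_of_le σ le_rfl, if_pos hk, if_neg hik.not_gt] at hbal
  rw [upTo, downFrom, ← upcrossings_add (Nat.zero_le _) hi]
  omega

theorem upTo_add_downFrom_of_lt (hki : k < i) (hi : i < n) :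
    upTo σ k i + downFrom σ k i = upcrossings (word σ) k 0 n := by
  have hin := ((pos_lt_iff σ).2 hi).le
  have hbal := upcrossings_add_ite_eq (word σ) k hin
  rw [word_pos, word_of_le σ le_rfl, if_pos hki, if_pos (hki.trans hi)] at hbal
  rw [upTo, downFrom, ← upcrossings_add (Nat.zero_le _) hin]
  omega

theorem upTo_zero_zero : upTo σ 0 0 = 0 := by
  refine upcrossings_eq_zero fun j hj h => ?_
  have := word_ne_of_lt_pos σ (mem_Ico.1 hj).2
  omega

theorem downFrom_zero_zero : downFrom σ 0 0 = 0 := by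
  refine downcrossings_eq_zero fun j hj h => ?_
  have : word σ (j + 1) ≠ 0 := word_ne_of_pos_lt σ (Nat.lt_succ_of_le (mem_Ico.1 hj).1)
  omega

theorem upTo_last (hk : k + 1 = n) : upTo σ k k = 0 := by
  refine upcrossings_eq_zero fun j hj h => ?_
  have hkn : pos σ k < n := (pos_lt_iff σ).2 (Nat.lt_of_succ_le hk.le)
  have : word σ (j + 1) < n := (word_lt_iff σ).2 (hkn.trans_le' (mem_Ico.1 hj).2)
  omega

theorem downFrom_last (hk : k + 1 = n) : downFrom σ k k = 0 := by
  refine downcrossings_eq_zero fun j hj h => ?_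
  have := (word_lt_iff σ).2 (mem_Ico.1 hj).2
  omega

theorem downBefore_last (hk : k + 1 = n) : downBefore σ k = 0 := by
  rcases k with _ | k
  · rfl
  refine downcrossings_eq_zero fun j hj h => ?_
  have hne := word_ne_of_lt_pos σ (mem_Ico.1 hj).2
  have hlt := (mem_Ico.1 hj).2.trans ((pos_lt_iff σ).2 (Nat.lt_of_succ_le hk.le))
  rw [← word_lt_iff σ] at hlt
  omega

theorem downBefore_succ_add_one (k : ℕ) :
    downBefore σ (k + 1) + 1 = upTo σ k (k + 1) + if k < word σ 0 then 1 else 0 := by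
  have hbal := upcrossings_add_ite_eq (word σ) k (Nat.zero_le (pos σ (k + 1)))
  rw [word_pos, if_pos k.lt_add_one] at hbal
  exact hbal.symm

theorem upAfter_succ_add_one (hk : k + 1 < n) :
    upAfter σ (k + 1) + 1 = downFrom σ k (k + 1) + if k < word σ (n - 1) then 1 else 0 := by
  have hpos : pos σ (k + 1) ≤ n - 1 := Nat.le_sub_one_of_lt ((pos_lt_iff σ).2 hk)
  have hbal := upcrossings_add_ite_eq (word σ) k hpos
  have hsentinel : k < word σ (n - 1 + 1) := by
    rw [word_of_le σ (by omega)]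
    omega
  have hlast : downFrom σ k (k + 1) = downcrossings (word σ) k (pos σ (k + 1)) (n - 1 + 1) := by
    rw [downFrom, Nat.sub_add_cancel (Nat.one_le_of_lt hk)]
  rw [downcrossings_succ hpos, if_neg fun h => h.2.not_gt hsentinel, add_zero] at hlast
  rw [word_pos, if_pos k.lt_add_one] at hbal
  rw [hlast, upAfter, hbal]

theorem upTo_word_zero (k : ℕ) : upTo σ k (word σ 0) = 0 := by
  rw [upTo, pos_word, upcrossings_self]

theorem downBefore_word_zero : downBefore σ (word σ 0) = 0 := by
  rcases h : word σ 0 with _ | k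
  · rfl
  · rw [downBefore, ← h, pos_word, downcrossings_self]

theorem upAfter_word_last : upAfter σ (word σ (n - 1)) = 0 := by
  rcases h : word σ (n - 1) with _ | k
  · rfl
  · rw [upAfter, ← h, pos_word, upcrossings_self]

theorem upTo_succ_self_le : upTo σ (k + 1) (k + 1) ≤ upTo σ k (k + 1) :=
  upcrossings_level_succ_le fun _ hj => word_ne_of_lt_pos σ (mem_Ico.1 hj).2

theorem upTo_le_succ_self_add_one : upTo σ k (k + 1) ≤ upTo σ (k + 1) (k + 1) + 1 :=
  upcrossings_le_level_succ_add_one fun _ hj => word_ne_of_lt_pos σ (mem_Ico.1 hj).2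

theorem downFrom_succ_self_le : downFrom σ (k + 1) (k + 1) ≤ downFrom σ k (k + 1) :=
  downcrossings_level_succ_le fun _ hj => word_ne_of_pos_lt σ (mem_Ioc.1 hj).1

theorem downFrom_le_succ_self_add_one : downFrom σ k (k + 1) ≤ downFrom σ (k + 1) (k + 1) + 1 :=
  downcrossings_le_level_succ_add_one fun _ hj => word_ne_of_pos_lt σ (mem_Ioc.1 hj).1

theorem upTo_succ_of_pos_lt (h : pos σ i < pos σ (k + 1)) : upTo σ (k + 1) i = upTo σ k i :=
  upcrossings_level_succ fun _ hj => word_ne_of_lt_pos σ ((mem_Icc.1 hj).2.trans_lt h)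

theorem downFrom_succ_of_pos_lt (h : pos σ (k + 1) < pos σ i) :
    downFrom σ (k + 1) i = downFrom σ k i :=
  downcrossings_level_succ fun _ hj => word_ne_of_pos_lt σ (h.trans_le (mem_Icc.1 hj).1)

theorem upTo_succ_add_of_pos_succ_lt (hik : i ≤ k) (hk : k + 1 < n) (h : pos σ (k + 1) < pos σ i) :
    upTo σ (k + 1) i + (upTo σ k k + downFrom σ k k) =
      upTo σ k i + (upTo σ (k + 1) (k + 1) + downFrom σ (k + 1) (k + 1)) := by
  have hkn := Nat.lt_of_succ_lt hk
  have hi := upTo_add_downFrom_of_le (σ := σ) hik hkn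
  have hi' := upTo_add_downFrom_of_le (σ := σ) (hik.trans (Nat.le_add_right k 1)) hk
  rw [← upTo_add_downFrom_of_le le_rfl hkn] at hi
  rw [← upTo_add_downFrom_of_le le_rfl hk, downFrom_succ_of_pos_lt h] at hi'
  omega

theorem pos_lt_pos_succ_iff (hik : i ≤ k) :
    pos σ i < pos σ (k + 1) ↔ upTo σ k i < upTo σ k (k + 1) := by
  constructor <;> intro h
  · rw [upTo, upTo, ← upcrossings_add (Nat.zero_le _) h.le]
    exact Nat.lt_add_of_pos_right
      (upcrossings_pos_of_lt h.le (by rwa [word_pos]) (by rw [word_pos]; exact k.lt_add_one))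
  · by_contra! hle
    rw [upTo, upTo, ← upcrossings_add (Nat.zero_le _) hle] at h
    omega

theorem upTo_lt_upTo_iff (hik : i ≤ k) (hjk : j ≤ k) :
    upTo σ k i < upTo σ k j ↔ ∃ p > k, pos σ i < pos σ p ∧ pos σ p < pos σ j := by
  have hpos : upTo σ k i < upTo σ k j ↔ 0 < upcrossings (word σ) k (pos σ i) (pos σ j) := by
    rcases le_total (pos σ i) (pos σ j) with h | h
    · rw [upTo, upTo, ← upcrossings_add (Nat.zero_le _) h]
      omega
    · rw [upTo, upTo, ← upcrossings_add (Nat.zero_le _) h, upcrossings_pos_iff,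
        Ico_eq_empty_of_le h]
      simp
  rw [hpos, upcrossings_pos_iff_exists_lt (by rwa [word_pos]) (by rwa [word_pos]),
    (word σ).symm.surjective.exists]
  simp [pos, and_comm]

theorem isLowerSet_range_upTo (k : ℕ) :
    IsLowerSet (Set.range fun i : Set.Iic k => upTo σ k i) := by
  rintro _ t ht ⟨i, rfl⟩
  rcases ht.eq_or_lt with rfl | ht
  · exact ⟨i, rfl⟩
  · obtain ⟨j, -, hj, -, hjt⟩ := exists_upcrossings_eq (Nat.zero_le _) ht
    exact ⟨⟨word σ j, hj⟩, by simp only [upTo, pos_word, hjt]⟩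

end Profile

/-! ### Baxter permutations in terms of crossings -/

section Baxter

open Finset

variable {n : ℕ} {σ : Equiv.Perm (Fin n)}

theorem exists_vincular_iff (R : ℕ → ℕ → ℕ → ℕ → Prop) :
    (∃ i j l : Fin n, pv i < pv j ∧ pv j + 1 < pv l ∧
      R (valAt σ (pv i)) (valAt σ (pv j)) (valAt σ (pv j + 1)) (valAt σ (pv l))) ↔
    ∃ i j l : ℕ, i < j ∧ j + 1 < l ∧ l < n ∧
      R (word σ i + 1) (word σ j + 1) (word σ (j + 1) + 1) (word σ l + 1) := by
  have hval {i j l : Fin n} (hjl : (j : ℕ) + 1 < l) :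
      R (valAt σ (pv i)) (valAt σ (pv j)) (valAt σ (pv j + 1)) (valAt σ (pv l)) ↔
        R (word σ i + 1) (word σ j + 1) (word σ (j + 1) + 1) (word σ l + 1) := by
    rw [valAt_pv, valAt_pv, valAt_pv, valAt_pv_add_one σ (hjl.trans l.isLt)]
  simp only [pv, Nat.add_lt_add_iff_right] at hval ⊢
  constructor
  · rintro ⟨i, j, l, hij, hjl, h⟩
    exact ⟨i, j, l, hij, hjl, l.isLt, (hval hjl).1 h⟩
  · rintro ⟨i, j, l, hij, hjl, hl, h⟩
    exact ⟨⟨i, by omega⟩, ⟨j, by omega⟩, ⟨l, hl⟩, hij, hjl, (hval hjl).2 h⟩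

theorem contains2413_iff : Contains2413 σ ↔ ∃ i j l : ℕ, i < j ∧ j + 1 < l ∧ l < n ∧
    word σ (j + 1) < word σ i ∧ word σ i < word σ l ∧ word σ l < word σ j := by
  simpa only [Contains2413, Nat.add_lt_add_iff_right] using
    exists_vincular_iff (σ := σ) fun i j j' l => j' < i ∧ i < l ∧ l < j

theorem contains3142_iff : Contains3142 σ ↔ ∃ i j l : ℕ, i < j ∧ j + 1 < l ∧ l < n ∧
    word σ j < word σ l ∧ word σ l < word σ i ∧ word σ i < word σ (j + 1) := by
  simpa only [Contains3142, Nat.add_lt_add_iff_right] using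
    exists_vincular_iff (σ := σ) fun i j j' l => j < l ∧ l < i ∧ i < j'

theorem not_contains2413_iff : ¬ Contains2413 σ ↔
    ∀ k, k + 1 < n → downcrossings (word σ) k (pos σ k) (pos σ (k + 1)) = 0 := by
  rw [contains2413_iff, not_iff_comm]
  push Not
  simp only [Nat.ne_zero_iff_zero_lt, downcrossings_pos_iff, mem_Ico]
  constructor
  · rintro ⟨k, hk, j, ⟨hkj, hjk⟩, hkw, hwk⟩
    have hcur := word_eq_iff σ (j := j) (k := k)
    have hcur' := word_eq_iff σ (j := j) (k := k + 1)
    have hnext := word_eq_iff σ (j := j + 1) (k := k)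
    have hnext' := word_eq_iff σ (j := j + 1) (k := k + 1)
    refine ⟨pos σ k, j, pos σ (k + 1), by omega, by omega, (pos_lt_iff σ).2 hk, ?_⟩
    rw [word_pos, word_pos]
    omega
  · rintro ⟨i, j, l, hij, hjl, hl, hji, hil, hlj⟩
    obtain ⟨k, hk, hkj, hjk⟩ := exists_mem_Ico_and_not_succ (P := fun k => pos σ k ≤ j) hil.le
      (by rw [pos_word]; exact hij.le) (by rw [pos_word]; omega)
    have := (word_lt_iff σ).2 hl
    rw [mem_Ico] at hk
    exact ⟨k, by omega, j, ⟨hkj, by omega⟩, by omega, by omega⟩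

theorem not_contains3142_iff : ¬ Contains3142 σ ↔
    ∀ k, k + 1 < n → upcrossings (word σ) k (pos σ (k + 1)) (pos σ k) = 0 := by
  rw [contains3142_iff, not_iff_comm]
  push Not
  simp only [Nat.ne_zero_iff_zero_lt, upcrossings_pos_iff, mem_Ico]
  constructor
  · rintro ⟨k, hk, j, ⟨hkj, hjk⟩, hwk, hkw⟩
    have hcur := word_eq_iff σ (j := j) (k := k)
    have hcur' := word_eq_iff σ (j := j) (k := k + 1)
    have hnext := word_eq_iff σ (j := j + 1) (k := k)
    have hnext' := word_eq_iff σ (j := j + 1) (k := k + 1)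
    refine ⟨pos σ (k + 1), j, pos σ k, by omega, by omega, (pos_lt_iff σ).2 (by omega), ?_⟩
    rw [word_pos, word_pos]
    omega
  · rintro ⟨i, j, l, hij, hjl, hl, hjl', hli, hij'⟩
    obtain ⟨k, hk, hkj, hjk⟩ := exists_mem_Ico_and_not_succ (P := fun k => j < pos σ k) hli.le
      (by rw [pos_word]; omega) (by rw [pos_word]; omega)
    have := (word_lt_iff σ).2 (hij.trans (by omega : j < n))
    rw [mem_Ico] at hk
    exact ⟨k, by omega, j, ⟨by omega, hkj⟩, by omega, by omega⟩

theorem isBaxter_iff_upTo : IsBaxter σ ↔ ∀ k, k + 1 < n →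
    upTo σ k k ≤ upTo σ k (k + 1) ∧ upTo σ k (k + 1) ≤ upTo σ k k + 1 := by
  rw [IsBaxter, not_contains3142_iff, not_contains2413_iff, and_comm, ← forall₂_and]
  refine forall₂_congr fun k _ => ?_
  rcases le_total (pos σ k) (pos σ (k + 1)) with h | h
  · have hbal := upcrossings_add_ite_eq (word σ) k h
    rw [word_pos, word_pos, if_neg (lt_irrefl k), if_pos k.lt_add_one] at hbal
    rw [upTo, upTo, ← upcrossings_add (Nat.zero_le _) h, upcrossings, Ico_eq_empty_of_le h,
      sum_empty]
    omega
  · rw [upTo, upTo, ← upcrossings_add (Nat.zero_le _) h, downcrossings, Ico_eq_empty_of_le h,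
      sum_empty]
    omega

end Baxter

/-! ### Slot walks -/

/-- A recipe for building a Baxter permutation by inserting the letters `0, 1, …, n - 1` in
increasing order. The letters `≤ k` form maximal blocks of a word; `left k` and `right k` count the
blocks to the left and to the right of the one containing `k`, while `leftNext k` and `rightNext k`
count the blocks on either side of the slot receiving `k + 1`. The Baxter condition makes that slot
adjacent to the block of `k`, and a new letter either founds a block or joins its neighbours. -/
structure SlotWalk (n : ℕ) where
  left : ℕ → ℕ
  right : ℕ → ℕ
  leftNext : ℕ → ℕ
  rightNext : ℕ → ℕ
  left_zero : left 0 = 0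
  right_zero : right 0 = 0
  left_last {k : ℕ} : k + 1 = n → left k = 0
  right_last {k : ℕ} : k + 1 = n → right k = 0
  next_add {k : ℕ} : k + 1 < n → leftNext k + rightNext k = left k + right k + 1
  left_le_leftNext {k : ℕ} : k + 1 < n → left k ≤ leftNext k
  leftNext_le {k : ℕ} : k + 1 < n → leftNext k ≤ left k + 1
  left_succ_le {k : ℕ} : k + 1 < n → left (k + 1) ≤ leftNext k
  leftNext_le_succ {k : ℕ} : k + 1 < n → leftNext k ≤ left (k + 1) + 1
  right_succ_le {k : ℕ} : k + 1 < n → right (k + 1) ≤ rightNext k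
  rightNext_le_succ {k : ℕ} : k + 1 < n → rightNext k ≤ right (k + 1) + 1

namespace SlotWalk

open Finset

variable {n : ℕ} (w : SlotWalk n) {i j k l : ℕ}

/-- The index, counted from the left, of the block of letters `≤ k` which contains the letter
`i ≤ k`. Inserting `k + 1` preserves the indices of the blocks to its left, and the indices counted
from the right of the blocks to its right. -/
def blockIndex : ℕ → ℕ → ℕ
  | 0, _ => 0
  | k + 1, i =>
    if i = k + 1 then w.left (k + 1)
    else if blockIndex k i < w.leftNext k then blockIndex k i
    else blockIndex k i + (w.left (k + 1) + w.right (k + 1)) - (w.left k + w.right k)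

/-- The order in which the letters occur in the word encoded by `w`. -/
def Precedes (i j : ℕ) : Prop :=
  (i < j ∧ w.blockIndex (j - 1) i < w.leftNext (j - 1)) ∨
    (j < i ∧ w.leftNext (i - 1) ≤ w.blockIndex (i - 1) j)

theorem blockIndex_self (k : ℕ) : w.blockIndex k k = w.left k := by
  cases k with
  | zero => exact w.left_zero.symm
  | succ k => exact if_pos rfl

variable {w}

theorem blockIndex_succ_of_lt (hik : i ≤ k) (h : w.blockIndex k i < w.leftNext k) :
    w.blockIndex (k + 1) i = w.blockIndex k i :=
  (if_neg (Nat.lt_succ_of_le hik).ne).trans (if_pos h)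

theorem blockIndex_succ_of_ge (hik : i ≤ k) (h : w.leftNext k ≤ w.blockIndex k i) :
    w.blockIndex (k + 1) i =
      w.blockIndex k i + (w.left (k + 1) + w.right (k + 1)) - (w.left k + w.right k) :=
  (if_neg (Nat.lt_succ_of_le hik).ne).trans (if_neg h.not_gt)

theorem blockIndex_le (hk : k < n) (hik : i ≤ k) : w.blockIndex k i ≤ w.left k + w.right k := by
  induction k with
  | zero => exact Nat.zero_le _
  | succ k ih =>
    obtain rfl | hik := Nat.le_succ_iff_eq_or_le.1 hik
    · exact (w.blockIndex_self _).trans_le (Nat.le_add_right _ _)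
    · have := ih (Nat.lt_of_succ_lt hk) hik
      rcases lt_or_ge (w.blockIndex k i) (w.leftNext k) with h | h
      · have := w.leftNext_le_succ hk
        rw [blockIndex_succ_of_lt hik h]
        omega
      · rw [blockIndex_succ_of_ge hik h]
        omega

theorem exists_blockIndex_eq (hk : k < n) {b : ℕ} (hb : b ≤ w.left k + w.right k) :
    ∃ i ≤ k, w.blockIndex k i = b := by
  induction k generalizing b with
  | zero =>
    rw [w.left_zero, w.right_zero] at hb
    exact ⟨0, le_rfl, (Nat.le_zero.1 hb).symm⟩
  | succ k ih =>
    have hadd := w.next_add hk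
    have hnext := w.leftNext_le hk
    have hleft := w.left_succ_le hk
    have hleft' := w.leftNext_le_succ hk
    have hright := w.right_succ_le hk
    have hright' := w.rightNext_le_succ hk
    have ih {b} := @ih (Nat.lt_of_succ_lt hk) b
    rcases lt_trichotomy b (w.left (k + 1)) with hlt | rfl | hgt
    · obtain ⟨i, hi, rfl⟩ := ih (b := b) (by omega)
      exact ⟨i, hi.trans k.le_succ, blockIndex_succ_of_lt hi (by omega)⟩
    · exact ⟨k + 1, le_rfl, w.blockIndex_self _⟩
    · obtain ⟨i, hi, hib⟩ :=
        ih (b := b + (w.left k + w.right k) - (w.left (k + 1) + w.right (k + 1))) (by omega)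
      refine ⟨i, hi.trans k.le_succ, ?_⟩
      rw [blockIndex_succ_of_ge hi (by omega), hib]
      omega

theorem blockIndex_succ_mono (hk : k + 1 < n) (hik : i ≤ k) (hjk : j ≤ k)
    (hij : w.blockIndex k i ≤ w.blockIndex k j) :
    w.blockIndex (k + 1) i ≤ w.blockIndex (k + 1) j := by
  have hadd := w.next_add hk
  have hleft' := w.leftNext_le_succ hk
  have hright' := w.rightNext_le_succ hk
  rcases lt_or_ge (w.blockIndex k i) (w.leftNext k) with hi | hi <;>
    rcases lt_or_ge (w.blockIndex k j) (w.leftNext k) with hj | hj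
  · rwa [blockIndex_succ_of_lt hik hi, blockIndex_succ_of_lt hjk hj]
  · rw [blockIndex_succ_of_lt hik hi, blockIndex_succ_of_ge hjk hj]
    omega
  · omega
  · rw [blockIndex_succ_of_ge hik hi, blockIndex_succ_of_ge hjk hj]
    omega

theorem blockIndex_mono (hl : l < n) (hkl : k ≤ l) (hik : i ≤ k) (hjk : j ≤ k)
    (hij : w.blockIndex k i ≤ w.blockIndex k j) : w.blockIndex l i ≤ w.blockIndex l j := by
  induction l, hkl using Nat.le_induction with
  | base => exact hij
  | succ l hkl ih =>
    exact blockIndex_succ_mono hl (hik.trans hkl) (hjk.trans hkl) (ih (Nat.lt_of_succ_lt hl))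

theorem precedes_succ_right (hik : i ≤ k) :
    w.Precedes i (k + 1) ↔ w.blockIndex k i < w.leftNext k := by
  rw [Precedes, Nat.add_sub_cancel]
  omega

theorem precedes_succ_left (hik : i ≤ k) :
    w.Precedes (k + 1) i ↔ w.leftNext k ≤ w.blockIndex k i := by
  rw [Precedes, Nat.add_sub_cancel]
  omega

theorem Precedes.ne (h : w.Precedes i j) : i ≠ j := by
  rcases h with h | h
  · exact h.1.ne
  · exact h.1.ne'

theorem precedes_iff_not_precedes (hij : i ≠ j) : w.Precedes i j ↔ ¬ w.Precedes j i := by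
  rw [Precedes, Precedes]
  omega

theorem Precedes.blockIndex_le_blockIndex (h : w.Precedes i j) (hk : k < n) (hik : i ≤ k)
    (hjk : j ≤ k) : w.blockIndex k i ≤ w.blockIndex k j := by
  rcases lt_or_gt_of_ne h.ne with hij | hji
  · refine blockIndex_mono hk hjk hij.le le_rfl ?_
    obtain ⟨j, rfl⟩ := Nat.exists_eq_add_one_of_ne_zero (Nat.ne_zero_of_lt hij)
    have hij := Nat.le_of_lt_succ hij
    rw [precedes_succ_right hij] at h
    rw [blockIndex_succ_of_lt hij h, w.blockIndex_self]
    have := w.leftNext_le_succ (hjk.trans_lt hk)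
    omega
  · refine blockIndex_mono hk hik le_rfl hji.le ?_
    obtain ⟨i, rfl⟩ := Nat.exists_eq_add_one_of_ne_zero (Nat.ne_zero_of_lt hji)
    have hji := Nat.le_of_lt_succ hji
    have hin := hik.trans_lt hk
    rw [precedes_succ_left hji] at h
    rw [blockIndex_succ_of_ge hji h, w.blockIndex_self]
    have hadd := w.next_add hin
    have := w.left_succ_le hin
    have := w.rightNext_le_succ hin
    omega

theorem not_precedes_cycle_of_lt (hl : l < n) (hil : i < l) (hjl : j < l) (hij : w.Precedes i j)
    (hj : w.Precedes j l) : ¬ w.Precedes l i := by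
  obtain ⟨k, rfl⟩ := Nat.exists_eq_add_one_of_ne_zero (Nat.ne_zero_of_lt hil)
  have hik := Nat.le_of_lt_succ hil
  have hjk := Nat.le_of_lt_succ hjl
  rw [precedes_succ_right hjk] at hj
  rw [precedes_succ_left hik]
  have := hij.blockIndex_le_blockIndex (Nat.lt_of_succ_lt hl) hik hjk
  omega

theorem not_precedes_cycle (hi : i < n) (hj : j < n) (hl : l < n) (hij : w.Precedes i j)
    (hjl : w.Precedes j l) : ¬ w.Precedes l i := by
  intro hli
  have hij' := hij.ne
  have hjl' := hjl.ne
  have hli' := hli.ne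
  obtain h | h | h : (i < l ∧ j < l) ∨ (j < i ∧ l < i) ∨ (l < j ∧ i < j) := by omega
  · exact not_precedes_cycle_of_lt hl h.1 h.2 hij hjl hli
  · exact not_precedes_cycle_of_lt hi h.1 h.2 hjl hli hij
  · exact not_precedes_cycle_of_lt hj h.1 h.2 hli hij hjl

theorem blockIndex_succ_strictMono (hk : k + 1 < n) (hik : i ≤ k) (hjk : j ≤ k)
    (hslot : ¬ (w.blockIndex k i < w.leftNext k ∧ w.leftNext k ≤ w.blockIndex k j))
    (hij : w.blockIndex k i < w.blockIndex k j) :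
    w.blockIndex (k + 1) i < w.blockIndex (k + 1) j := by
  have hadd := w.next_add hk
  have hleft := w.left_succ_le hk
  have hleft' := w.leftNext_le_succ hk
  have hright := w.rightNext_le_succ hk
  rcases lt_or_ge (w.blockIndex k j) (w.leftNext k) with hj | hj
  · rwa [blockIndex_succ_of_lt hik (hij.trans hj), blockIndex_succ_of_lt hjk hj]
  · rw [blockIndex_succ_of_ge hik (by omega), blockIndex_succ_of_ge hjk hj]
    omega

theorem exists_precedes_of_blockIndex_lt (hk : k < n) (hik : i ≤ k) (hjk : j ≤ k)
    (hij : w.blockIndex k i < w.blockIndex k j) :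
    ∃ p > k, p < n ∧ w.Precedes i p ∧ w.Precedes p j := by
  induction hm : n - k generalizing k with
  | zero => omega
  | succ m ih =>
    rcases (Nat.succ_le_of_lt hk).eq_or_lt with hkn | hkn
    · have := blockIndex_le (w := w) hk hjk
      rw [w.left_last hkn, w.right_last hkn] at this
      omega
    by_cases hslot : w.blockIndex k i < w.leftNext k ∧ w.leftNext k ≤ w.blockIndex k j
    · exact ⟨k + 1, k.lt_add_one, hkn, (precedes_succ_right hik).2 hslot.1,
        (precedes_succ_left hjk).2 hslot.2⟩
    · obtain ⟨p, hp, hpn⟩ := ih hkn (hik.trans k.le_succ) (hjk.trans k.le_succ)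
        (blockIndex_succ_strictMono hkn hik hjk hslot hij) (by omega)
      exact ⟨p, Nat.lt_of_succ_lt hp, hpn⟩

theorem blockIndex_lt_iff (hk : k < n) (hik : i ≤ k) (hjk : j ≤ k) :
    w.blockIndex k i < w.blockIndex k j ↔
      ∃ p > k, p < n ∧ w.Precedes i p ∧ w.Precedes p j := by
  refine ⟨exists_precedes_of_blockIndex_lt hk hik hjk, ?_⟩
  rintro ⟨p, hp, hpn, hip, hpj⟩
  by_contra! hle
  obtain ⟨p, rfl⟩ := Nat.exists_eq_add_one_of_ne_zero (Nat.ne_zero_of_lt hp)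
  have hkp := Nat.le_of_lt_succ hp
  rw [precedes_succ_right (hik.trans hkp)] at hip
  rw [precedes_succ_left (hjk.trans hkp)] at hpj
  have := blockIndex_mono (Nat.lt_of_succ_lt hpn) hkp hjk hik hle
  omega

theorem precedes_isStrictTotalOrder :
    IsStrictTotalOrder (Fin n) fun i j => w.Precedes i j where
  irrefl _ h := h.ne rfl
  trans i j l hij hjl := by
    have hcycle := not_precedes_cycle i.isLt j.isLt l.isLt hij hjl
    refine (precedes_iff_not_precedes fun hil => ?_).2 hcycle
    exact (precedes_iff_not_precedes hij.ne).1 hij (hil ▸ hjl)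
  trichotomous i j hij hji := by
    by_contra hne
    exact hij ((precedes_iff_not_precedes (Fin.val_ne_of_ne hne)).2 hji)

theorem exists_perm_pos_lt_iff (w : SlotWalk n) : ∃ τ : Equiv.Perm (Fin n), ∀ i < n, ∀ j < n,
    pos τ i < pos τ j ↔ w.Precedes i j := by
  have := w.precedes_isStrictTotalOrder
  obtain ⟨e, he⟩ := exists_equiv_fin_lt_iff (Fintype.card_fin n) fun i j : Fin n => w.Precedes i j
  refine ⟨e.symm, fun i hi j hj => ?_⟩
  rw [pos_coe _ ⟨i, hi⟩, pos_coe _ ⟨j, hj⟩]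
  exact he ⟨i, hi⟩ ⟨j, hj⟩

section Realization

variable {τ : Equiv.Perm (Fin n)} (hτ : ∀ i < n, ∀ j < n, pos τ i < pos τ j ↔ w.Precedes i j)
include hτ

theorem upTo_eq_blockIndex (hk : k < n) (hik : i ≤ k) : upTo τ k i = w.blockIndex k i := by
  have hrange : IsLowerSet (Set.range fun i : Set.Iic k => w.blockIndex k i) := by
    rintro _ b hb ⟨⟨i, hi⟩, rfl⟩
    obtain ⟨j, hj, hjb⟩ := exists_blockIndex_eq hk (hb.trans (blockIndex_le hk hi))
    exact ⟨⟨j, hj⟩, hjb⟩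
  refine congrFun (eq_of_isLowerSet_range (isLowerSet_range_upTo k) hrange ?_) ⟨i, hik⟩
  rintro ⟨i, hi⟩ ⟨j, hj⟩
  have hin := hi.trans_lt hk
  have hjn := hj.trans_lt hk
  rw [upTo_lt_upTo_iff hi hj, blockIndex_lt_iff hk hi hj]
  refine exists_congr fun p => and_congr_right fun _ => ?_
  constructor
  · rintro ⟨hip, hpj⟩
    have hpn := (pos_lt_iff τ).1 (hpj.trans ((pos_lt_iff τ).2 hjn))
    exact ⟨hpn, (hτ i hin p hpn).1 hip, (hτ p hpn j hjn).1 hpj⟩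
  · rintro ⟨hpn, hip, hpj⟩
    exact ⟨(hτ i hin p hpn).2 hip, (hτ p hpn j hjn).2 hpj⟩

theorem upTo_self_eq_left (hk : k < n) : upTo τ k k = w.left k := by
  rw [upTo_eq_blockIndex hτ hk le_rfl, w.blockIndex_self]

theorem upcrossings_eq_left_add_right (hk : k < n) :
    upcrossings (word τ) k 0 n = w.left k + w.right k + 1 := by
  have hself := upTo_add_downFrom_of_le (σ := τ) le_rfl hk
  refine le_antisymm ?_ ?_
  · obtain ⟨j, -, hj, -, htop⟩ := exists_upcrossings_eq (f := word τ) (Nat.zero_le n)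
      ((Nat.lt_add_one (upTo τ k k + downFrom τ k k)).trans_eq hself)
    have hle := blockIndex_le (w := w) hk hj
    rw [← upTo_eq_blockIndex hτ hk hj, upTo, pos_word] at hle
    omega
  · obtain ⟨i, hi, htop⟩ := exists_blockIndex_eq (w := w) hk le_rfl
    have := upTo_add_downFrom_of_le (σ := τ) hi hk
    rw [← upTo_eq_blockIndex hτ hk hi] at htop
    omega

theorem downFrom_self_eq_right (hk : k < n) : downFrom τ k k = w.right k := by
  have hsum := upTo_add_downFrom_of_le (σ := τ) le_rfl hk
  rw [upTo_self_eq_left hτ hk, upcrossings_eq_left_add_right hτ hk] at hsum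
  omega

theorem upTo_succ_eq_leftNext (hk : k + 1 < n) : upTo τ k (k + 1) = w.leftNext k := by
  have hkn := Nat.lt_of_succ_lt hk
  have hsum := upTo_add_downFrom_of_lt (σ := τ) k.lt_add_one hk
  rw [upcrossings_eq_left_add_right hτ hkn] at hsum
  have hadd := w.next_add hk
  have hslot {b : ℕ} (hb : b ≤ w.left k + w.right k) : b < upTo τ k (k + 1) ↔ b < w.leftNext k := by
    obtain ⟨i, hi, rfl⟩ := exists_blockIndex_eq hkn hb
    rw [← precedes_succ_right hi, ← upTo_eq_blockIndex hτ hkn hi, ← pos_lt_pos_succ_iff hi]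
    exact hτ i (hi.trans_lt hkn) (k + 1) hk
  rcases lt_trichotomy (upTo τ k (k + 1)) (w.leftNext k) with h | h | h
  · exact absurd ((hslot (by omega)).2 h) (lt_irrefl _)
  · exact h
  · exact absurd ((hslot (by omega)).1 h) (lt_irrefl _)

theorem downFrom_succ_eq_rightNext (hk : k + 1 < n) : downFrom τ k (k + 1) = w.rightNext k := by
  have hsum := upTo_add_downFrom_of_lt (σ := τ) k.lt_add_one hk
  rw [upTo_succ_eq_leftNext hτ hk, upcrossings_eq_left_add_right hτ (Nat.lt_of_succ_lt hk)] at hsum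
  have := w.next_add hk
  omega

theorem isBaxter_of_pos_lt_iff : IsBaxter τ := by
  refine isBaxter_iff_upTo.2 fun k hk => ?_
  rw [upTo_self_eq_left hτ (Nat.lt_of_succ_lt hk), upTo_succ_eq_leftNext hτ hk]
  exact ⟨w.left_le_leftNext hk, w.leftNext_le hk⟩

end Realization

end SlotWalk

/-! ### The correspondence -/

section Correspondence

open Finset

variable {n k : ℕ} {σ σ' τ : Equiv.Perm (Fin n)}

/-- The letterwise occurrence numbers of `\underline{31}2`, `2\underline{31}` and `2\underline{13}`
in `σ` are those of `\underline{13}2`, `2\underline{31}` and `2\underline{13}` in `τ`; those of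
`2\underline{13}` enter through `downFrom k (k + 1)`, by `upAfter_succ_add_one`. -/
structure SwapsPrefixPatterns (σ τ : Equiv.Perm (Fin n)) : Prop where
  downBefore_eq {k : ℕ} (hk : k < n) : downBefore σ k = upTo τ k k
  downFrom_self_eq {k : ℕ} (hk : k < n) : downFrom σ k k = downFrom τ k k
  downFrom_succ_eq {k : ℕ} (hk : k + 1 < n) : downFrom σ k (k + 1) = downFrom τ k (k + 1)

theorem upTo_succ_add_downFrom_succ (hk : k + 1 < n) :
    upTo σ k (k + 1) + downFrom σ k (k + 1) = upTo σ k k + downFrom σ k k + 1 := by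
  rw [upTo_add_downFrom_of_lt k.lt_add_one hk,
    upTo_add_downFrom_of_le le_rfl (Nat.lt_of_succ_lt hk)]

theorem downBefore_le_and_le_downBefore_add_one (σ : Equiv.Perm (Fin n)) (k : ℕ) :
    downBefore σ k ≤ upTo σ k k + (if k < word σ 0 then 1 else 0) ∧
      upTo σ k k + (if k < word σ 0 then 1 else 0) ≤ downBefore σ k + 1 := by
  rcases eq_or_ne k (word σ 0) with rfl | hne
  · rw [upTo_word_zero, downBefore_word_zero, if_neg (lt_irrefl _)]
    omega
  rcases k with _ | k
  · rw [upTo_zero_zero, downBefore]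
    split_ifs <;> omega
  · have hbefore := downBefore_succ_add_one (σ := σ) k
    have hle := upTo_succ_self_le (σ := σ) (k := k)
    have hge := upTo_le_succ_self_add_one (σ := σ) (k := k)
    split_ifs at hbefore ⊢ <;> omega

/-- The slot walk of the permutation corresponding to `σ`. -/
def downBeforeWalk (hσ : IsBaxter σ) : SlotWalk n where
  left k := downBefore σ k
  right k := downFrom σ k k
  leftNext k := downBefore σ k + downFrom σ k k + 1 - downFrom σ k (k + 1)
  rightNext k := downFrom σ k (k + 1)
  left_zero := rfl
  right_zero := downFrom_zero_zero
  left_last := downBefore_last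
  right_last := downFrom_last
  next_add {k} hk := by
    have := isBaxter_iff_upTo.1 hσ k hk
    have := upTo_succ_add_downFrom_succ (σ := σ) hk
    omega
  left_le_leftNext {k} hk := by
    have := isBaxter_iff_upTo.1 hσ k hk
    have := upTo_succ_add_downFrom_succ (σ := σ) hk
    omega
  leftNext_le {k} hk := by
    have := isBaxter_iff_upTo.1 hσ k hk
    have := upTo_succ_add_downFrom_succ (σ := σ) hk
    omega
  left_succ_le {k} hk := by
    have := upTo_succ_add_downFrom_succ (σ := σ) hk
    have := downBefore_le_and_le_downBefore_add_one σ k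
    have := downBefore_succ_add_one (σ := σ) k
    omega
  leftNext_le_succ {k} hk := by
    have := upTo_succ_add_downFrom_succ (σ := σ) hk
    have := downBefore_le_and_le_downBefore_add_one σ k
    have := downBefore_succ_add_one (σ := σ) k
    omega
  right_succ_le _ := downFrom_succ_self_le
  rightNext_le_succ _ := downFrom_le_succ_self_add_one

theorem exists_swapsPrefixPatterns (hσ : IsBaxter σ) :
    ∃ τ : Equiv.Perm (Fin n), IsBaxter τ ∧ SwapsPrefixPatterns σ τ := by
  obtain ⟨τ, hτ⟩ := (downBeforeWalk hσ).exists_perm_pos_lt_iff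
  exact ⟨τ, SlotWalk.isBaxter_of_pos_lt_iff hτ,
    fun hk => (SlotWalk.upTo_self_eq_left hτ hk).symm,
    fun hk => (SlotWalk.downFrom_self_eq_right hτ hk).symm,
    fun hk => (SlotWalk.downFrom_succ_eq_rightNext hτ hk).symm⟩

namespace SwapsPrefixPatterns

theorem word_zero_le (h : SwapsPrefixPatterns σ τ)
    (h' : SwapsPrefixPatterns σ' τ) : word σ' 0 ≤ word σ 0 := by
  -- If `k = word σ 0 < word σ' 0`, the common data force `upTo σ' k k = upTo σ k k - 1 = -1`.
  by_contra! hlt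
  rcases n.eq_zero_or_pos with rfl | hn
  · rw [word_of_le σ le_rfl, word_of_le σ' le_rfl] at hlt
    exact lt_irrefl _ hlt
  set k := word σ 0 with hk
  have hkn : k + 1 < n := Nat.lt_of_le_of_lt hlt ((word_lt_iff σ').2 hn)
  have hbefore := downBefore_succ_add_one (σ := σ) k
  have hbefore' := downBefore_succ_add_one (σ := σ') k
  rw [← hk, if_neg (lt_irrefl k)] at hbefore
  rw [if_pos hlt] at hbefore'
  have hleft : upTo σ k k = 0 := upTo_word_zero k
  have hsum := upTo_succ_add_downFrom_succ (σ := σ) hkn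
  have hsum' := upTo_succ_add_downFrom_succ (σ := σ') hkn
  have hright := h.downFrom_self_eq (Nat.lt_of_succ_lt hkn)
  have hright' := h'.downFrom_self_eq (Nat.lt_of_succ_lt hkn)
  have hnext := h.downFrom_succ_eq hkn
  have hnext' := h'.downFrom_succ_eq hkn
  have heq := h.downBefore_eq hkn
  have heq' := h'.downBefore_eq hkn
  omega

theorem upTo_succ_eq (h : SwapsPrefixPatterns σ τ) (h' : SwapsPrefixPatterns σ' τ)
    (hk : k + 1 < n) : upTo σ k (k + 1) = upTo σ' k (k + 1) := by
  have hbefore := downBefore_succ_add_one (σ := σ) k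
  have hbefore' := downBefore_succ_add_one (σ := σ') k
  rw [h.downBefore_eq hk] at hbefore
  rw [h'.downBefore_eq hk, (h.word_zero_le h').antisymm (h'.word_zero_le h), hbefore] at hbefore'
  exact Nat.add_right_cancel hbefore'

theorem upTo_self_eq (h : SwapsPrefixPatterns σ τ) (h' : SwapsPrefixPatterns σ' τ) (hk : k < n) :
    upTo σ k k = upTo σ' k k := by
  rcases (Nat.succ_le_of_lt hk).eq_or_lt with hkn | hkn
  · rw [upTo_last hkn, upTo_last hkn]
  · have hsum := upTo_succ_add_downFrom_succ (σ := σ) hkn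
    have hsum' := upTo_succ_add_downFrom_succ (σ := σ') hkn
    rw [h.downFrom_self_eq hk, h.downFrom_succ_eq hkn, h.upTo_succ_eq h' hkn] at hsum
    rw [h'.downFrom_self_eq hk, h'.downFrom_succ_eq hkn] at hsum'
    omega

theorem upTo_eq (h : SwapsPrefixPatterns σ τ) (h' : SwapsPrefixPatterns σ' τ) {i : ℕ}
    (hk : k < n) (hik : i ≤ k) : upTo σ k i = upTo σ' k i := by
  induction k with
  | zero => rw [Nat.le_zero.1 hik, h.upTo_self_eq h' hk]
  | succ k ih =>
    have hkn := Nat.lt_of_succ_lt hk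
    obtain rfl | hik := Nat.le_succ_iff_eq_or_le.1 hik
    · exact h.upTo_self_eq h' hk
    have hpos : pos σ i < pos σ (k + 1) ↔ pos σ' i < pos σ' (k + 1) := by
      rw [pos_lt_pos_succ_iff hik, pos_lt_pos_succ_iff hik, ih hkn hik, h.upTo_succ_eq h' hk]
    have hne : i ≠ k + 1 := (Nat.lt_succ_of_le hik).ne
    rcases lt_or_gt_of_ne ((pos σ).injective.ne hne) with hlt | hgt
    · rw [upTo_succ_of_pos_lt hlt, upTo_succ_of_pos_lt (hpos.1 hlt), ih hkn hik]
    · have hgt' := (((pos σ').injective.ne hne).lt_or_gt).resolve_left (mt hpos.2 hgt.not_gt)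
      have hrec := upTo_succ_add_of_pos_succ_lt hik hk hgt
      have hrec' := upTo_succ_add_of_pos_succ_lt hik hk hgt'
      rw [ih hkn hik, h.upTo_self_eq h' hkn, h.upTo_self_eq h' hk, h.downFrom_self_eq hkn,
        h.downFrom_self_eq hk] at hrec
      rw [h'.downFrom_self_eq hkn, h'.downFrom_self_eq hk] at hrec'
      omega

theorem leftUnique (h : SwapsPrefixPatterns σ τ) (h' : SwapsPrefixPatterns σ' τ) : σ = σ' := by
  refine perm_eq_of_pos_lt_iff fun i j hij hj => ?_
  obtain ⟨k, rfl⟩ := Nat.exists_eq_add_one_of_ne_zero (Nat.ne_zero_of_lt hij)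
  have hik := Nat.le_of_lt_succ hij
  rw [pos_lt_pos_succ_iff hik, pos_lt_pos_succ_iff hik, h.upTo_eq h' (Nat.lt_of_succ_lt hj) hik,
    h.upTo_succ_eq h' hj]

theorem word_last_le (h : ∀ k, k + 1 < n → downFrom σ k (k + 1) = downFrom τ k (k + 1)) :
    word τ (n - 1) ≤ word σ (n - 1) := by
  by_contra! hlt
  have hn : n - 1 < n := by
    by_contra! hn
    rw [word_of_le σ hn, word_of_le τ hn] at hlt
    exact lt_irrefl _ hlt
  obtain ⟨k, hk⟩ := Nat.exists_eq_add_one_of_ne_zero (Nat.ne_zero_of_lt hlt)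
  have hkn : k + 1 < n := hk ▸ (word_lt_iff τ).2 hn
  have hσ := upAfter_succ_add_one (σ := σ) hkn
  have hτ := upAfter_succ_add_one (σ := τ) hkn
  have hlast := upAfter_word_last (σ := τ)
  rw [hk] at hlast
  rw [hlast, if_pos (hk ▸ k.lt_add_one)] at hτ
  rw [h k hkn, if_neg (by omega)] at hσ
  omega

theorem upAfter_eq (h : SwapsPrefixPatterns σ τ) (hk : k < n) : upAfter σ k = upAfter τ k := by
  rcases k with _ | k
  · rfl
  have hlast : word σ (n - 1) = word τ (n - 1) :=
    (word_last_le fun _ hk => (h.downFrom_succ_eq hk).symm).antisymm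
      (word_last_le fun _ hk => h.downFrom_succ_eq hk)
  apply Nat.add_right_cancel (m := 1)
  rw [upAfter_succ_add_one hk, upAfter_succ_add_one hk, h.downFrom_succ_eq hk, hlast]

theorem stat31_2_eq (h : SwapsPrefixPatterns σ τ) : stat31_2 σ = stat13_2 τ := by
  rw [stat31_2_eq_sum, stat13_2_eq_sum]
  exact sum_congr rfl fun k hk => h.downBefore_eq (mem_range.1 hk)

theorem stat2_31_eq (h : SwapsPrefixPatterns σ τ) : stat2_31 σ = stat2_31 τ := by
  rw [stat2_31_eq_sum, stat2_31_eq_sum]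
  exact sum_congr rfl fun k hk => h.downFrom_self_eq (mem_range.1 hk)

theorem stat2_13_eq (h : SwapsPrefixPatterns σ τ) : stat2_13 σ = stat2_13 τ := by
  rw [stat2_13_eq_sum, stat2_13_eq_sum]
  exact sum_congr rfl fun k hk => h.upAfter_eq (mem_range.1 hk)

end SwapsPrefixPatterns

theorem sum_stat31_2_eq_sum_stat13_2 {R : Type*} [CommSemiring R] (q r s : R) :
    ∑ σ ∈ {σ : Equiv.Perm (Fin n) | IsBaxter σ},
        q ^ stat31_2 σ * r ^ stat2_13 σ * s ^ stat2_31 σ =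
      ∑ τ ∈ {τ : Equiv.Perm (Fin n) | IsBaxter τ},
        q ^ stat13_2 τ * r ^ stat2_13 τ * s ^ stat2_31 τ := by
  refine sum_eq_sum_of_leftUnique (r := SwapsPrefixPatterns) (fun σ hσ => ?_)
    (fun _ _ _ _ _ _ h h' => h.leftUnique h')
    fun σ _ τ _ h => by rw [h.stat31_2_eq, h.stat2_13_eq, h.stat2_31_eq]
  obtain ⟨τ, hτ, h⟩ := exists_swapsPrefixPatterns ((mem_filter_univ σ).1 hσ)
  exact ⟨τ, (mem_filter_univ τ).2 hτ, h⟩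

end Correspondence

/-! ### Complements -/

section Complement

open Finset

variable {n : ℕ}

/-- The complement `n + 1 - σ₁, …, n + 1 - σₙ` of a permutation. It exchanges `\underline{31}2` with
`\underline{13}2` and `2\underline{31}` with `2\underline{13}`. -/
def complement (σ : Equiv.Perm (Fin n)) : Equiv.Perm (Fin n) := σ.trans Fin.revPerm

variable (σ : Equiv.Perm (Fin n))

theorem complement_involutive : Function.Involutive (complement (n := n)) :=
  fun σ => Equiv.ext fun i => Fin.rev_rev (σ i)

theorem complement_symm_rev (l : Fin n) : (complement σ).symm l.rev = σ.symm l :=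
  congrArg σ.symm (Fin.rev_rev l)

theorem pv_rev_add_pv (l : Fin n) : pv l.rev + pv l = n + 1 := by
  rw [pv, pv, Fin.val_rev]
  omega

theorem valAt_complement_add_valAt {p : ℕ} (hp : 1 ≤ p) (hpn : p ≤ n) :
    valAt (complement σ) p + valAt σ p = n + 1 := by
  rw [valAt, valAt, dif_pos ⟨hp, hpn⟩, dif_pos ⟨hp, hpn⟩]
  exact pv_rev_add_pv _

theorem one_le_pv (j : Fin n) : 1 ≤ pv j := Nat.le_add_left 1 j

theorem pv_le (j : Fin n) : pv j ≤ n := j.isLt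

theorem stat31_2_complement : stat31_2 (complement σ) = stat13_2 σ := by
  refine (card_equiv (Fin.revPerm.prodCongr (.refl _)) fun ⟨l, j⟩ => ?_).symm
  simp only [mem_filter_univ, Equiv.prodCongr_apply, Prod.map, Fin.revPerm_apply,
    Equiv.refl_apply, complement_symm_rev]
  refine and_congr_right fun hj => and_congr_right fun _ => ?_
  have hl := pv_rev_add_pv l
  have hcur := valAt_complement_add_valAt σ hj.le (pv_le j)
  have hprev := valAt_complement_add_valAt σ (Nat.le_sub_one_of_lt hj) (Nat.sub_le_of_le_add
    ((pv_le j).trans n.le_succ))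
  omega

theorem stat2_13_complement : stat2_13 (complement σ) = stat2_31 σ := by
  refine (card_equiv (Fin.revPerm.prodCongr (.refl _)) fun ⟨l, j⟩ => ?_).symm
  simp only [mem_filter_univ, Equiv.prodCongr_apply, Prod.map, Fin.revPerm_apply,
    Equiv.refl_apply, complement_symm_rev]
  refine and_congr_right fun _ => and_congr_right fun hj => ?_
  have hl := pv_rev_add_pv l
  have hcur := valAt_complement_add_valAt σ (one_le_pv j) hj.le
  have hnext := valAt_complement_add_valAt σ (Nat.le_add_left 1 _) hj
  omega

theorem stat2_31_complement : stat2_31 (complement σ) = stat2_13 σ := by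
  rw [← stat2_13_complement, complement_involutive]

theorem contains3142_complement_iff : Contains3142 (complement σ) ↔ Contains2413 σ := by
  refine exists₃_congr fun i j l => and_congr_right fun _ => and_congr_right fun hjl => ?_
  have hi := valAt_complement_add_valAt σ (one_le_pv i) (pv_le i)
  have hj := valAt_complement_add_valAt σ (one_le_pv j) (pv_le j)
  have hj' := valAt_complement_add_valAt σ (Nat.le_add_left 1 _) (hjl.le.trans (pv_le l))
  have hl := valAt_complement_add_valAt σ (one_le_pv l) (pv_le l)
  omega

theorem isBaxter_complement_iff : IsBaxter (complement σ) ↔ IsBaxter σ := by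
  rw [IsBaxter, IsBaxter, contains3142_complement_iff, ← contains3142_complement_iff (complement σ),
    complement_involutive, and_comm]

end Complement

/-- (\underline{31}2, 2\underline{13}, 2\underline{31}) and
(\underline{31}2, 2\underline{31}, 2\underline{13}) are equidistributed on
Baxter permutations. -/
theorem baxter_trivariate_symmetry (n : ℕ) (R : Type*) [CommSemiring R] (q r s : R) :
    ∑ σ ∈ Finset.univ.filter (fun σ : Equiv.Perm (Fin n) => IsBaxter ⇑σ),
      q ^ stat31_2 σ * r ^ stat2_13 σ * s ^ stat2_31 σ =
    ∑ σ ∈ Finset.univ.filter (fun σ : Equiv.Perm (Fin n) => IsBaxter ⇑σ),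
      q ^ stat31_2 σ * r ^ stat2_31 σ * s ^ stat2_13 σ := by
  rw [sum_stat31_2_eq_sum_stat13_2]
  refine Finset.sum_equiv complement_involutive.toPerm (fun σ => ?_) fun σ _ => ?_
  · rw [Finset.mem_filter_univ, Finset.mem_filter_univ, Function.Involutive.coe_toPerm,
      isBaxter_complement_iff]
  · rw [Function.Involutive.coe_toPerm, stat31_2_complement, stat2_13_complement,
      stat2_31_complement]

end Paper
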